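/- arXiv:1009.5479 — 3 statements merged into one kernel-verified Lean document; each statement's English description precedes it below -/
import Mathlib

section
/- Let (A, Ω, T, ∗, { }, { }_Ω) be a vertex algebroid over ℂ, let φ: (A, Ω, T) → (A', Ω', T') be an isomorphism of extended Lie algebroids, and let Δ: T → Ω' be a ℂ-linear map. Define operations ∗': A'×T' → Ω', { }': T'×T' → A', { }'_Ω: T'×T' → Ω' by the formulas (φf) ∗' (φX) := φ(f∗X) + Δ(fX) − (φf)·Δ(X), {φX, φY}' := φ{X,Y} − Δ(X)(φY) − Δ(Y)(φX), and {φX, φY}'_Ω := φ{X,Y}_Ω − L_{φX}Δ(Y) + L_{φY}Δ(X) − d(Δ(X)(φY)) + Δ([X,Y]), for f ∈ A and X, Y ∈ T (these determine the operations since φ is bijective). Then (A', Ω', T', ∗', { }', { }'_Ω) is a vertex algebroid, and the pair (φ, Δ) is an isomorphism between the two vertex algebroids. -/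
universe u v w u' v' w' u'' v'' w''

/-- An extended Lie algebroid over ℂ, on carrier types `A` (functions),
`Ω` (1-forms) and `T` (vector fields). -/
structure ExtLieAlgebroid (A : Type u) (Ω : Type v) (T : Type w)
    [CommRing A] [Algebra ℂ A]
    [AddCommGroup Ω] [Module ℂ Ω] [Module A Ω] [IsScalarTower ℂ A Ω]
    [AddCommGroup T] [Module ℂ T] [Module A T] [IsScalarTower ℂ A T] where
  /-- the derivation `d : A → Ω` (ℂ-linear) -/
  d : A →ₗ[ℂ] Ω
  d_mul : ∀ f g : A, d (f * g) = f • d g + g • d f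
  /-- the image of `d` generates `Ω` as an `A`-module -/
  d_span : ∀ ω : Ω, ω ∈ Submodule.span A (Set.range d)
  /-- the Lie bracket on `T` -/
  bracket : T → T → T
  bracket_add_left : ∀ X Y Z, bracket (X + Y) Z = bracket X Z + bracket Y Z
  bracket_add_right : ∀ X Y Z, bracket X (Y + Z) = bracket X Y + bracket X Z
  bracket_smulC_left : ∀ (c : ℂ) (X Y), bracket (c • X) Y = c • bracket X Y
  bracket_smulC_right : ∀ (c : ℂ) (X Y), bracket X (c • Y) = c • bracket X Y
  bracket_skew : ∀ X Y, bracket X Y = - bracket Y X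
  bracket_jacobi : ∀ X Y Z,
    bracket X (bracket Y Z) = bracket (bracket X Y) Z + bracket Y (bracket X Z)
  /-- the action of `T` on `A` by derivations, `X ↦ (f ↦ Xf)`; it is `A`-linear in `X` -/
  act : T → A → A
  act_add_left : ∀ X Y f, act (X + Y) f = act X f + act Y f
  act_smulA_left : ∀ (f : A) (X) (g), act (f • X) g = f * act X g
  act_add_right : ∀ X f g, act X (f + g) = act X f + act X g
  act_smulC_right : ∀ (X) (c : ℂ) (f), act X (c • f) = c • act X f
  act_mul : ∀ X f g, act X (f * g) = f * act X g + g * act X f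
  act_bracket : ∀ X Y f, act (bracket X Y) f = act X (act Y f) - act Y (act X f)
  /-- the ℂ-linear Lie algebra action `X ↦ L_X` of `T` on `Ω` -/
  lie : T → Ω → Ω
  lie_add_left : ∀ X Y α, lie (X + Y) α = lie X α + lie Y α
  lie_smulC_left : ∀ (c : ℂ) (X) (α), lie (c • X) α = c • lie X α
  lie_add_right : ∀ X α β, lie X (α + β) = lie X α + lie X β
  lie_smulC_right : ∀ (X) (c : ℂ) (α), lie X (c • α) = c • lie X α
  lie_bracket : ∀ X Y α, lie (bracket X Y) α = lie X (lie Y α) - lie Y (lie X α)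
  /-- the `A`-bilinear pairing `(α, X) ↦ α(X)` -/
  pair : Ω → T → A
  pair_add_left : ∀ α β X, pair (α + β) X = pair α X + pair β X
  pair_smulA_left : ∀ (f : A) (α X), pair (f • α) X = f * pair α X
  pair_add_right : ∀ α X Y, pair α (X + Y) = pair α X + pair α Y
  pair_smulA_right : ∀ (f : A) (α X), pair α (f • X) = f * pair α X
  /-- the `T`-action on `Ω` commutes with `d` (together with `act_smulC_right`,
  the `T`-action on `A` commutes with `d` as well) -/
  lie_d : ∀ X f, lie X (d f) = d (act X f)
  /-- Leibniz rule for the `T`-action on `Ω` -/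
  lie_smulA : ∀ (X) (f : A) (α), lie X (f • α) = f • lie X α + act X f • α
  /-- Leibniz rule for the `T`-action on `T` -/
  bracket_smulA_right : ∀ (X) (f : A) (Y),
    bracket X (f • Y) = f • bracket X Y + act X f • Y
  /-- `df(X) = Xf` -/
  pair_d : ∀ f X, pair (d f) X = act X f

variable {A : Type u} {Ω : Type v} {T : Type w}
  [CommRing A] [Algebra ℂ A]
  [AddCommGroup Ω] [Module ℂ Ω] [Module A Ω] [IsScalarTower ℂ A Ω]
  [AddCommGroup T] [Module ℂ T] [Module A T] [IsScalarTower ℂ A T]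
  {A' : Type u'} {Ω' : Type v'} {T' : Type w'}
  [CommRing A'] [Algebra ℂ A']
  [AddCommGroup Ω'] [Module ℂ Ω'] [Module A' Ω'] [IsScalarTower ℂ A' Ω']
  [AddCommGroup T'] [Module ℂ T'] [Module A' T'] [IsScalarTower ℂ A' T']

/-- The property, for ℂ-bilinear operations `(∗, { }, { }_Ω)` on an extended Lie
algebroid, of forming a vertex algebroid (axioms (1)–(7)). -/
structure IsVertexAlgebroid (E : ExtLieAlgebroid A Ω T)
    (star : A → T → Ω) (br : T → T → A) (brΩ : T → T → Ω) : Prop where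
  star_add_left : ∀ f g X, star (f + g) X = star f X + star g X
  star_smulC_left : ∀ (c : ℂ) (f X), star (c • f) X = c • star f X
  star_add_right : ∀ f X Y, star f (X + Y) = star f X + star f Y
  star_smulC_right : ∀ (f) (c : ℂ) (X), star f (c • X) = c • star f X
  br_add_left : ∀ X Y Z, br (X + Y) Z = br X Z + br Y Z
  br_smulC_left : ∀ (c : ℂ) (X Y), br (c • X) Y = c • br X Y
  br_add_right : ∀ X Y Z, br X (Y + Z) = br X Y + br X Z
  br_smulC_right : ∀ (X) (c : ℂ) (Y), br X (c • Y) = c • br X Y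
  brΩ_add_left : ∀ X Y Z, brΩ (X + Y) Z = brΩ X Z + brΩ Y Z
  brΩ_smulC_left : ∀ (c : ℂ) (X Y), brΩ (c • X) Y = c • brΩ X Y
  brΩ_add_right : ∀ X Y Z, brΩ X (Y + Z) = brΩ X Y + brΩ X Z
  brΩ_smulC_right : ∀ (X) (c : ℂ) (Y), brΩ X (c • Y) = c • brΩ X Y
  ax1 : ∀ X Y, br X Y = br Y X
  ax2 : ∀ X Y, E.d (br X Y) = brΩ X Y + brΩ Y X
  ax3 : ∀ f g X, star (f * g) X - star f (g • X) - f • star g X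
    = -(E.act X f) • E.d g - (E.act X g) • E.d f
  ax4 : ∀ (f : A) (X Y), br X (f • Y) - f * br X Y
    = - E.pair (star f Y) X - E.act Y (E.act X f)
  ax5 : ∀ (f : A) (X Y), brΩ X (f • Y) - f • brΩ X Y
    = - E.lie X (star f Y) + star (E.act X f) Y + star f (E.bracket X Y)
  ax6 : ∀ X Y Z, E.act X (br Y Z) - br (E.bracket X Y) Z - br Y (E.bracket X Z)
    = E.pair (brΩ X Y) Z + E.pair (brΩ X Z) Y
  ax7 : ∀ X Y Z,
    E.lie X (brΩ Y Z) - E.lie Y (brΩ X Z) + E.lie Z (brΩ X Y)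
      + brΩ X (E.bracket Y Z) - brΩ Y (E.bracket X Z) - brΩ (E.bracket X Y) Z
    = E.d (E.pair (brΩ X Y) Z)

/-- A triple of maps `(fA, fΩ, fT)` is a morphism of extended Lie algebroids if it
respects all of the structure. -/
structure IsExtLieAlgebroidHom (E : ExtLieAlgebroid A Ω T) (E' : ExtLieAlgebroid A' Ω' T')
    (fA : A → A') (fΩ : Ω → Ω') (fT : T → T') : Prop where
  fA_one : fA 1 = 1
  fA_add : ∀ f g, fA (f + g) = fA f + fA g
  fA_mul : ∀ f g, fA (f * g) = fA f * fA g
  fA_smulC : ∀ (c : ℂ) (f), fA (c • f) = c • fA f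
  fΩ_add : ∀ α β, fΩ (α + β) = fΩ α + fΩ β
  fΩ_smulA : ∀ (f : A) (α), fΩ (f • α) = fA f • fΩ α
  fT_add : ∀ X Y, fT (X + Y) = fT X + fT Y
  fT_smulA : ∀ (f : A) (X), fT (f • X) = fA f • fT X
  map_d : ∀ f, fΩ (E.d f) = E'.d (fA f)
  map_bracket : ∀ X Y, fT (E.bracket X Y) = E'.bracket (fT X) (fT Y)
  map_act : ∀ X f, fA (E.act X f) = E'.act (fT X) (fA f)
  map_lie : ∀ X α, fΩ (E.lie X α) = E'.lie (fT X) (fΩ α)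
  map_pair : ∀ α X, fA (E.pair α X) = E'.pair (fΩ α) (fT X)

/-- A pair `(φ, Δ) = ((fA, fΩ, fT), Δ)` is a morphism of vertex algebroids if `φ` is a
morphism of the underlying extended Lie algebroids, `Δ : T → Ω'` is ℂ-linear, and the
three compatibility equations (i), (ii), (iii) hold. -/
structure IsVertexAlgebroidHom
    (E : ExtLieAlgebroid A Ω T) (star : A → T → Ω) (br : T → T → A) (brΩ : T → T → Ω)
    (E' : ExtLieAlgebroid A' Ω' T') (star' : A' → T' → Ω') (br' : T' → T' → A')
    (brΩ' : T' → T' → Ω')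
    (fA : A → A') (fΩ : Ω → Ω') (fT : T → T') (Δ : T → Ω') : Prop where
  ext_hom : IsExtLieAlgebroidHom E E' fA fΩ fT
  Δ_add : ∀ X Y, Δ (X + Y) = Δ X + Δ Y
  Δ_smulC : ∀ (c : ℂ) (X), Δ (c • X) = c • Δ X
  eq_star : ∀ (f : A) (X : T),
    star' (fA f) (fT X) - fΩ (star f X) = Δ (f • X) - fA f • Δ X
  eq_br : ∀ X Y, br' (fT X) (fT Y) - fA (br X Y)
    = - E'.pair (Δ X) (fT Y) - E'.pair (Δ Y) (fT X)
  eq_brΩ : ∀ X Y, brΩ' (fT X) (fT Y) - fΩ (brΩ X Y)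
    = - E'.lie (fT X) (Δ Y) + E'.lie (fT Y) (Δ X)
      - E'.d (E'.pair (Δ X) (fT Y)) + Δ (E.bracket X Y)

/-!
Since `ℂ` is a field and `φ` is surjective on forms, `Δ` lifts to a `ℂ`-linear map `T → Ω`. The
transported operations are then the images under `φ` of the operations on `(A, Ω, T)` twisted by
this lift, and images under a surjective morphism inherit all axioms. So only a twist on a fixed
extended Lie algebroid has to be examined. There the correction terms cancel because
`X(α(Y)) = (L_X α)(Y) + α([X, Y])` and `L_{fX} α = f L_X α + α(X) df`; since exact forms generate
`Ω`, both formulas need to be checked only for `α = dg`.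
-/

namespace ExtLieAlgebroid

variable (E : ExtLieAlgebroid A Ω T)

theorem act_sub_right (X : T) (f g : A) : E.act X (f - g) = E.act X f - E.act X g :=
  (AddMonoidHom.mk' (E.act X) (E.act_add_right X)).map_sub f g

theorem lie_sub_right (X : T) (α β : Ω) : E.lie X (α - β) = E.lie X α - E.lie X β :=
  (AddMonoidHom.mk' (E.lie X) (E.lie_add_right X)).map_sub α β

theorem pair_sub_left (α β : Ω) (X : T) : E.pair (α - β) X = E.pair α X - E.pair β X :=
  (AddMonoidHom.mk' (E.pair · X) fun α β => E.pair_add_left α β X).map_sub α β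

theorem pair_neg_right (α : Ω) (X : T) : E.pair α (-X) = -E.pair α X :=
  (AddMonoidHom.mk' (E.pair α) (E.pair_add_right α)).map_neg X

theorem pair_smulC_left (c : ℂ) (α : Ω) (X : T) : E.pair (c • α) X = c • E.pair α X := by
  rw [← algebraMap_smul A c α, E.pair_smulA_left, Algebra.smul_def]

theorem pair_smulC_right (c : ℂ) (α : Ω) (X : T) : E.pair α (c • X) = c • E.pair α X := by
  rw [← algebraMap_smul A c X, E.pair_smulA_right, Algebra.smul_def]

@[elab_as_elim]
theorem form_induction {p : Ω → Prop} (d : ∀ f, p (E.d f))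
    (add : ∀ α β, p α → p β → p (α + β)) (smul : ∀ (f : A) α, p α → p (f • α))
    (α : Ω) : p α := by
  induction E.d_span α using Submodule.span_induction with
  | mem _ hα => obtain ⟨f, rfl⟩ := hα; exact d f
  | zero => simpa using d 0
  | add α β _ _ hα hβ => exact add α β hα hβ
  | smul f α _ hα => exact smul f α hα

theorem act_pair (X Y : T) (α : Ω) :
    E.act X (E.pair α Y) = E.pair (E.lie X α) Y + E.pair α (E.bracket X Y) := by
  induction α using E.form_induction with
  | d f => rw [E.lie_d, E.pair_d, E.pair_d, E.pair_d, E.act_bracket]; abel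
  | add α β hα hβ => simp only [E.pair_add_left, E.act_add_right, E.lie_add_right, hα, hβ]; abel
  | smul f α hα => simp only [E.pair_add_left, E.pair_smulA_left, E.act_mul, E.lie_smulA, hα]; ring

theorem lie_smulA_left (f : A) (X : T) (α : Ω) :
    E.lie (f • X) α = f • E.lie X α + E.pair α X • E.d f := by
  induction α using E.form_induction with
  | d g => rw [E.lie_d, E.lie_d, E.act_smulA_left, E.d_mul, E.pair_d]
  | add α β hα hβ => simp only [E.pair_add_left, E.lie_add_right, hα, hβ]; module
  | smul g α hα => simp only [E.pair_smulA_left, E.lie_smulA, E.act_smulA_left, hα]; module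

/-- The operation `∗` twisted by `Δ`: the one that makes `(id, Δ)` satisfy equation (i) in the
definition of a morphism of vertex algebroids. -/
def twistStar (star : A → T → Ω) (Δ : T →ₗ[ℂ] Ω) (f : A) (X : T) : Ω :=
  star f X + Δ (f • X) - f • Δ X

/-- The operation `{ }` twisted by `Δ`: the one that makes `(id, Δ)` satisfy equation (ii) in the
definition of a morphism of vertex algebroids. -/
def twistBr (br : T → T → A) (Δ : T →ₗ[ℂ] Ω) (X Y : T) : A :=
  br X Y - E.pair (Δ X) Y - E.pair (Δ Y) X

/-- The operation `{ }_Ω` twisted by `Δ`: the one that makes `(id, Δ)` satisfy equation (iii) in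
the definition of a morphism of vertex algebroids. -/
def twistBrΩ (brΩ : T → T → Ω) (Δ : T →ₗ[ℂ] Ω) (X Y : T) : Ω :=
  brΩ X Y - E.lie X (Δ Y) + E.lie Y (Δ X) - E.d (E.pair (Δ X) Y) + Δ (E.bracket X Y)

end ExtLieAlgebroid

open ExtLieAlgebroid (twistStar twistBr twistBrΩ)

namespace IsVertexAlgebroid

variable {E : ExtLieAlgebroid A Ω T} {star : A → T → Ω} {br : T → T → A} {brΩ : T → T → Ω}

theorem twistBr_comm (hV : IsVertexAlgebroid E star br brΩ) (Δ : T →ₗ[ℂ] Ω) (X Y : T) :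
    E.twistBr br Δ X Y = E.twistBr br Δ Y X := by
  rw [twistBr, twistBr, hV.ax1 X Y]
  ring

theorem d_twistBr (hV : IsVertexAlgebroid E star br brΩ) (Δ : T →ₗ[ℂ] Ω) (X Y : T) :
    E.d (E.twistBr br Δ X Y) = E.twistBrΩ brΩ Δ X Y + E.twistBrΩ brΩ Δ Y X := by
  rw [twistBr, twistBrΩ, twistBrΩ, E.bracket_skew Y X, map_neg, map_sub, map_sub, hV.ax2]
  abel

theorem twistStar_mul_left (hV : IsVertexAlgebroid E star br brΩ) (Δ : T →ₗ[ℂ] Ω) (f g : A)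
    (X : T) :
    twistStar star Δ (f * g) X - twistStar star Δ f (g • X) - f • twistStar star Δ g X
      = -(E.act X f) • E.d g - (E.act X g) • E.d f := by
  rw [← hV.ax3, twistStar, twistStar, twistStar, mul_smul]
  module

theorem twistBr_smul_right (hV : IsVertexAlgebroid E star br brΩ) (Δ : T →ₗ[ℂ] Ω) (f : A)
    (X Y : T) :
    E.twistBr br Δ X (f • Y) - f * E.twistBr br Δ X Y
      = -E.pair (twistStar star Δ f Y) X - E.act Y (E.act X f) := by
  simp only [twistBr, twistStar, E.pair_smulA_right, E.pair_sub_left, E.pair_add_left,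
    E.pair_smulA_left]
  linear_combination hV.ax4 f X Y

theorem twistBrΩ_smul_right (hV : IsVertexAlgebroid E star br brΩ) (Δ : T →ₗ[ℂ] Ω) (f : A)
    (X Y : T) :
    E.twistBrΩ brΩ Δ X (f • Y) - f • E.twistBrΩ brΩ Δ X Y
      = -E.lie X (twistStar star Δ f Y) + twistStar star Δ (E.act X f) Y
        + twistStar star Δ f (E.bracket X Y) := by
  simp only [twistBrΩ, twistStar, E.pair_smulA_right, E.d_mul, E.lie_smulA_left,
    E.bracket_smulA_right, map_add, E.lie_sub_right, E.lie_add_right, E.lie_smulA]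
  linear_combination (norm := module) hV.ax5 f X Y

theorem act_twistBr (hV : IsVertexAlgebroid E star br brΩ) (Δ : T →ₗ[ℂ] Ω) (X Y Z : T) :
    E.act X (E.twistBr br Δ Y Z) - E.twistBr br Δ (E.bracket X Y) Z
        - E.twistBr br Δ Y (E.bracket X Z)
      = E.pair (E.twistBrΩ brΩ Δ X Y) Z + E.pair (E.twistBrΩ brΩ Δ X Z) Y := by
  simp only [twistBr, twistBrΩ, E.act_sub_right, E.pair_add_left, E.pair_sub_left, E.pair_d,
    E.act_pair, E.bracket_skew Z Y, E.pair_neg_right]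
  linear_combination hV.ax6 X Y Z

theorem lie_twistBrΩ (hV : IsVertexAlgebroid E star br brΩ) (Δ : T →ₗ[ℂ] Ω) (X Y Z : T) :
    E.lie X (E.twistBrΩ brΩ Δ Y Z) - E.lie Y (E.twistBrΩ brΩ Δ X Z)
        + E.lie Z (E.twistBrΩ brΩ Δ X Y) + E.twistBrΩ brΩ Δ X (E.bracket Y Z)
        - E.twistBrΩ brΩ Δ Y (E.bracket X Z) - E.twistBrΩ brΩ Δ (E.bracket X Y) Z
      = E.d (E.pair (E.twistBrΩ brΩ Δ X Y) Z) := by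
  simp only [twistBrΩ, E.lie_add_right, E.lie_sub_right, E.lie_d, E.lie_bracket,
    E.pair_add_left, E.pair_sub_left, E.pair_d, E.act_pair, map_add, map_sub,
    E.bracket_jacobi X Y Z]
  linear_combination (norm := module) hV.ax7 X Y Z

theorem twist (hV : IsVertexAlgebroid E star br brΩ) (Δ : T →ₗ[ℂ] Ω) :
    IsVertexAlgebroid E (twistStar star Δ) (E.twistBr br Δ) (E.twistBrΩ brΩ Δ) where
  star_add_left f g X := by
    simp only [twistStar, hV.star_add_left, add_smul, map_add]; abel
  star_smulC_left c f X := by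
    simp only [twistStar, hV.star_smulC_left, smul_assoc, map_smul, smul_add, smul_sub]
  star_add_right f X Y := by
    simp only [twistStar, hV.star_add_right, smul_add, map_add]; abel
  star_smulC_right f c X := by
    simp only [twistStar, hV.star_smulC_right, smul_comm f c, map_smul, smul_add, smul_sub]
  br_add_left X Y Z := by
    simp only [twistBr, hV.br_add_left, map_add, E.pair_add_left, E.pair_add_right]; ring
  br_smulC_left c X Y := by
    simp only [twistBr, hV.br_smulC_left, map_smul, E.pair_smulC_left, E.pair_smulC_right, smul_sub]
  br_add_right X Y Z := by
    simp only [twistBr, hV.br_add_right, map_add, E.pair_add_left, E.pair_add_right]; ring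
  br_smulC_right X c Y := by
    simp only [twistBr, hV.br_smulC_right, map_smul, E.pair_smulC_left, E.pair_smulC_right,
      smul_sub]
  brΩ_add_left X Y Z := by
    simp only [twistBrΩ, hV.brΩ_add_left, map_add, E.lie_add_left, E.lie_add_right,
      E.pair_add_left, E.bracket_add_left]; abel
  brΩ_smulC_left c X Y := by
    simp only [twistBrΩ, hV.brΩ_smulC_left, map_smul, E.lie_smulC_left, E.lie_smulC_right,
      E.pair_smulC_left, E.bracket_smulC_left, smul_add, smul_sub]
  brΩ_add_right X Y Z := by
    simp only [twistBrΩ, hV.brΩ_add_right, map_add, E.lie_add_left, E.lie_add_right,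
      E.pair_add_right, E.bracket_add_right]; abel
  brΩ_smulC_right X c Y := by
    simp only [twistBrΩ, hV.brΩ_smulC_right, map_smul, E.lie_smulC_left, E.lie_smulC_right,
      E.pair_smulC_right, E.bracket_smulC_right, smul_add, smul_sub]
  ax1 := hV.twistBr_comm Δ
  ax2 := hV.d_twistBr Δ
  ax3 := hV.twistStar_mul_left Δ
  ax4 := hV.twistBr_smul_right Δ
  ax5 := hV.twistBrΩ_smul_right Δ
  ax6 := hV.act_twistBr Δ
  ax7 := hV.lie_twistBrΩ Δ

end IsVertexAlgebroid

namespace IsExtLieAlgebroidHom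

variable {E : ExtLieAlgebroid A Ω T} {E' : ExtLieAlgebroid A' Ω' T'}
  {fA : A → A'} {fΩ : Ω → Ω'} {fT : T → T'}

theorem fA_neg (h : IsExtLieAlgebroidHom E E' fA fΩ fT) (f : A) : fA (-f) = -fA f :=
  (AddMonoidHom.mk' fA h.fA_add).map_neg f

theorem fA_sub (h : IsExtLieAlgebroidHom E E' fA fΩ fT) (f g : A) : fA (f - g) = fA f - fA g :=
  (AddMonoidHom.mk' fA h.fA_add).map_sub f g

theorem fA_algebraMap (h : IsExtLieAlgebroidHom E E' fA fΩ fT) (c : ℂ) :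
    fA (algebraMap ℂ A c) = algebraMap ℂ A' c := by
  rw [Algebra.algebraMap_eq_smul_one, h.fA_smulC, h.fA_one, Algebra.algebraMap_eq_smul_one]

theorem fΩ_neg (h : IsExtLieAlgebroidHom E E' fA fΩ fT) (α : Ω) : fΩ (-α) = -fΩ α :=
  (AddMonoidHom.mk' fΩ h.fΩ_add).map_neg α

theorem fΩ_sub (h : IsExtLieAlgebroidHom E E' fA fΩ fT) (α β : Ω) : fΩ (α - β) = fΩ α - fΩ β :=
  (AddMonoidHom.mk' fΩ h.fΩ_add).map_sub α β

theorem fΩ_smulC (h : IsExtLieAlgebroidHom E E' fA fΩ fT) (c : ℂ) (α : Ω) :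
    fΩ (c • α) = c • fΩ α := by
  rw [← algebraMap_smul A c α, h.fΩ_smulA, h.fA_algebraMap, algebraMap_smul]

theorem fT_smulC (h : IsExtLieAlgebroidHom E E' fA fΩ fT) (c : ℂ) (X : T) :
    fT (c • X) = c • fT X := by
  rw [← algebraMap_smul A c X, h.fT_smulA, h.fA_algebraMap, algebraMap_smul]

theorem fΩ_surjective (h : IsExtLieAlgebroidHom E E' fA fΩ fT) (hA : Function.Surjective fA) :
    Function.Surjective fΩ := by
  intro α
  induction α using E'.form_induction with
  | d f =>
    obtain ⟨f, rfl⟩ := hA f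
    exact ⟨E.d f, h.map_d f⟩
  | add _ _ hα hβ =>
    obtain ⟨⟨α, rfl⟩, ⟨β, rfl⟩⟩ := And.intro hα hβ
    exact ⟨α + β, h.fΩ_add α β⟩
  | smul f _ hα =>
    obtain ⟨⟨f, rfl⟩, ⟨α, rfl⟩⟩ := And.intro (hA f) hα
    exact ⟨f • α, h.fΩ_smulA f α⟩

theorem exists_linearMap_lift {V : Type*} [AddCommGroup V] [Module ℂ V]
    (h : IsExtLieAlgebroidHom E E' fA fΩ fT) (hA : Function.Surjective fA) (Δ : V →ₗ[ℂ] Ω') :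
    ∃ Δ' : V →ₗ[ℂ] Ω, ∀ v, fΩ (Δ' v) = Δ v :=
  have ⟨Δ', hΔ'⟩ := Module.projective_lifting_property
    (IsLinearMap.mk' fΩ ⟨h.fΩ_add, h.fΩ_smulC⟩) Δ (h.fΩ_surjective hA)
  ⟨Δ', LinearMap.congr_fun hΔ'⟩

end IsExtLieAlgebroidHom

theorem IsVertexAlgebroid.of_surjective
    {E : ExtLieAlgebroid A Ω T} {star : A → T → Ω} {br : T → T → A} {brΩ : T → T → Ω}
    {E' : ExtLieAlgebroid A' Ω' T'}
    {star' : A' → T' → Ω'} {br' : T' → T' → A'} {brΩ' : T' → T' → Ω'}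
    {fA : A → A'} {fΩ : Ω → Ω'} {fT : T → T'}
    (hV : IsVertexAlgebroid E star br brΩ) (h : IsExtLieAlgebroidHom E E' fA fΩ fT)
    (hA : Function.Surjective fA) (hT : Function.Surjective fT)
    (map_star : ∀ f X, star' (fA f) (fT X) = fΩ (star f X))
    (map_br : ∀ X Y, br' (fT X) (fT Y) = fA (br X Y))
    (map_brΩ : ∀ X Y, brΩ' (fT X) (fT Y) = fΩ (brΩ X Y)) :
    IsVertexAlgebroid E' star' br' brΩ' := by
  constructor <;>
    simp only [hA.forall, hT.forall, ← h.fA_add, ← h.fA_sub, ← h.fA_neg, ← h.fA_mul, ← h.fA_smulC,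
      ← h.fΩ_add, ← h.fΩ_sub, ← h.fΩ_neg, ← h.fΩ_smulA, ← h.fΩ_smulC,
      ← h.fT_add, ← h.fT_smulA, ← h.fT_smulC,
      ← h.map_d, ← h.map_bracket, ← h.map_act, ← h.map_lie, ← h.map_pair,
      map_star, map_br, map_brΩ]
  case star_add_left => exact fun f g X => congrArg fΩ (hV.star_add_left f g X)
  case star_smulC_left => exact fun c f X => congrArg fΩ (hV.star_smulC_left c f X)
  case star_add_right => exact fun f X Y => congrArg fΩ (hV.star_add_right f X Y)
  case star_smulC_right => exact fun f c X => congrArg fΩ (hV.star_smulC_right f c X)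
  case br_add_left => exact fun X Y Z => congrArg fA (hV.br_add_left X Y Z)
  case br_smulC_left => exact fun c X Y => congrArg fA (hV.br_smulC_left c X Y)
  case br_add_right => exact fun X Y Z => congrArg fA (hV.br_add_right X Y Z)
  case br_smulC_right => exact fun X c Y => congrArg fA (hV.br_smulC_right X c Y)
  case brΩ_add_left => exact fun X Y Z => congrArg fΩ (hV.brΩ_add_left X Y Z)
  case brΩ_smulC_left => exact fun c X Y => congrArg fΩ (hV.brΩ_smulC_left c X Y)
  case brΩ_add_right => exact fun X Y Z => congrArg fΩ (hV.brΩ_add_right X Y Z)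
  case brΩ_smulC_right => exact fun X c Y => congrArg fΩ (hV.brΩ_smulC_right X c Y)
  case ax1 => exact fun X Y => congrArg fA (hV.ax1 X Y)
  case ax2 => exact fun X Y => congrArg fΩ (hV.ax2 X Y)
  case ax3 => exact fun f g X => congrArg fΩ (hV.ax3 f g X)
  case ax4 => exact fun f X Y => congrArg fA (hV.ax4 f X Y)
  case ax5 => exact fun f X Y => congrArg fΩ (hV.ax5 f X Y)
  case ax6 => exact fun X Y Z => congrArg fA (hV.ax6 X Y Z)
  case ax7 => exact fun X Y Z => congrArg fΩ (hV.ax7 X Y Z)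

theorem transport_vertexAlgebroid_along_iso_general
    (E : ExtLieAlgebroid A Ω T) (star : A → T → Ω) (br : T → T → A) (brΩ : T → T → Ω)
    (hV : IsVertexAlgebroid E star br brΩ)
    (E' : ExtLieAlgebroid A' Ω' T')
    (fA : A → A') (fΩ : Ω → Ω') (fT : T → T')
    (hhom : IsExtLieAlgebroidHom E E' fA fΩ fT)
    (hA : Function.Surjective fA) (hT : Function.Surjective fT)
    (Δ : T → Ω')
    (hΔ_add : ∀ X Y, Δ (X + Y) = Δ X + Δ Y)
    (hΔ_smulC : ∀ (c : ℂ) (X), Δ (c • X) = c • Δ X)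
    (star' : A' → T' → Ω') (br' : T' → T' → A') (brΩ' : T' → T' → Ω')
    (hstar' : ∀ (f : A) (X : T),
      star' (fA f) (fT X) = fΩ (star f X) + Δ (f • X) - fA f • Δ X)
    (hbr' : ∀ X Y, br' (fT X) (fT Y)
      = fA (br X Y) - E'.pair (Δ X) (fT Y) - E'.pair (Δ Y) (fT X))
    (hbrΩ' : ∀ X Y, brΩ' (fT X) (fT Y)
      = fΩ (brΩ X Y) - E'.lie (fT X) (Δ Y) + E'.lie (fT Y) (Δ X)
        - E'.d (E'.pair (Δ X) (fT Y)) + Δ (E.bracket X Y)) :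
    IsVertexAlgebroid E' star' br' brΩ' ∧
    IsVertexAlgebroidHom E star br brΩ E' star' br' brΩ' fA fΩ fT Δ := by
  obtain ⟨Δ', hΔ'⟩ := hhom.exists_linearMap_lift hA (IsLinearMap.mk' Δ ⟨hΔ_add, hΔ_smulC⟩)
  simp only [IsLinearMap.mk'_apply] at hΔ'
  refine ⟨(hV.twist Δ').of_surjective hhom hA hT (fun f X => ?_) (fun X Y => ?_)
    (fun X Y => ?_), hhom, hΔ_add, hΔ_smulC, fun f X => ?_, fun X Y => ?_, fun X Y => ?_⟩
  · simp only [hstar', twistStar, hhom.fΩ_sub, hhom.fΩ_add, hhom.fΩ_smulA, hΔ']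
  · simp only [hbr', twistBr, hhom.fA_sub, hhom.map_pair, hΔ']
  · simp only [hbrΩ', twistBrΩ, hhom.fΩ_sub, hhom.fΩ_add, hhom.map_lie, hhom.map_d,
      hhom.map_pair, hΔ']
  · rw [hstar']; abel
  · rw [hbr']; abel
  · rw [hbrΩ']; abel

/-!
STATEMENT 0: Transporting a vertex algebroid structure along an isomorphism of
extended Lie algebroids `φ = (fA, fΩ, fT)` together with a ℂ-linear map `Δ : T → Ω'`:
the operations `∗'`, `{ }'`, `{ }'_Ω` defined by the morphism formulas make the target
an extended Lie algebroid into a vertex algebroid, and `(φ, Δ)` is then an isomorphism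
of vertex algebroids (its underlying map `φ` being bijective).
-/

theorem transport_vertexAlgebroid_along_iso
    (E : ExtLieAlgebroid A Ω T) (star : A → T → Ω) (br : T → T → A) (brΩ : T → T → Ω)
    (hV : IsVertexAlgebroid E star br brΩ)
    (E' : ExtLieAlgebroid A' Ω' T')
    (fA : A → A') (fΩ : Ω → Ω') (fT : T → T')
    (hhom : IsExtLieAlgebroidHom E E' fA fΩ fT)
    (hA : Function.Bijective fA) (hΩ : Function.Bijective fΩ)
    (hT : Function.Bijective fT)
    (Δ : T → Ω')
    (hΔ_add : ∀ X Y, Δ (X + Y) = Δ X + Δ Y)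
    (hΔ_smulC : ∀ (c : ℂ) (X), Δ (c • X) = c • Δ X)
    (star' : A' → T' → Ω') (br' : T' → T' → A') (brΩ' : T' → T' → Ω')
    (hstar' : ∀ (f : A) (X : T),
      star' (fA f) (fT X) = fΩ (star f X) + Δ (f • X) - fA f • Δ X)
    (hbr' : ∀ X Y, br' (fT X) (fT Y)
      = fA (br X Y) - E'.pair (Δ X) (fT Y) - E'.pair (Δ Y) (fT X))
    (hbrΩ' : ∀ X Y, brΩ' (fT X) (fT Y)
      = fΩ (brΩ X Y) - E'.lie (fT X) (Δ Y) + E'.lie (fT Y) (Δ X)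
        - E'.d (E'.pair (Δ X) (fT Y)) + Δ (E.bracket X Y)) :
    IsVertexAlgebroid E' star' br' brΩ' ∧
    IsVertexAlgebroidHom E star br brΩ E' star' br' brΩ' fA fΩ fT Δ :=
  transport_vertexAlgebroid_along_iso_general E star br brΩ hV E' fA fΩ fT hhom hA.2 hT.2 Δ
    hΔ_add hΔ_smulC star' br' brΩ' hstar' hbr' hbrΩ'
end

section
/- Let W ⊆ ℝ^p be open and let g: W → Matrix n n ℂ be a smooth map such that g(x) is invertible for every x ∈ W. Then the ℂ-valued 1-form tr(θ_g), where θ_g = g⁻¹·dg, is closed: for all x ∈ W and u, v ∈ ℝ^p, D_u(y ↦ tr(θ_g(y)(v)))(x) = D_v(y ↦ tr(θ_g(y)(u)))(x). -/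
/-!
STATEMENT 5: The 1-form tr(θ_g) is closed, where θ_g = g⁻¹·dg for a smooth
map g : W → Matrix n n ℂ with invertible values on an open set W ⊆ ℝ^p.
-/

attribute [local instance] Matrix.normedAddCommGroup Matrix.normedSpace

/-- The Maurer–Cartan form `θ_g(x)(v) = (g x)⁻¹ · (D_v g)(x)` of a matrix-valued map. -/
noncomputable def mcForm {p n : ℕ}
    (g : (Fin p → ℝ) → Matrix (Fin n) (Fin n) ℂ)
    (x v : Fin p → ℝ) : Matrix (Fin n) (Fin n) ℂ :=
  (g x)⁻¹ * fderiv ℝ g x v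

/-!
Differentiating `θ = g⁻¹ dg` gives `D_u θ(v) = g⁻¹ D²g(u, v) - θ(u) θ(v)`. The second derivative is
symmetric, so antisymmetrizing leaves the Maurer–Cartan equation `dθ = -θ ∧ θ`, whose right-hand
side is a commutator and therefore has trace zero. This works for a map into any Banach algebra and
any continuous linear map vanishing on commutators.
-/

open scoped Topology

section NormedAlgebra

variable {𝕜 E F A : Type*} [NontriviallyNormedField 𝕜] [NormedAddCommGroup E] [NormedSpace 𝕜 E]
  [NormedAddCommGroup F] [NormedSpace 𝕜 F]

theorem fderiv_clm_comp_apply_const {G : Type*} [NormedAddCommGroup G] [NormedSpace 𝕜 G]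
    (T : F →L[𝕜] G) {η : E → E →L[𝕜] F} {x : E} (hη : DifferentiableAt 𝕜 η x) (u v : E) :
    fderiv 𝕜 (fun y => T (η y v)) x u = T (fderiv 𝕜 η x u v) := by
  rw [fderiv_fun_comp x T.differentiableAt (hη.clm_apply (differentiableAt_const v)),
    fderiv_clm_apply hη (differentiableAt_const v)]
  simp

variable [NormedRing A] [NormedAlgebra 𝕜 A] {g : E → A} {x : E}

variable (𝕜) in
/-- The Maurer–Cartan form `g⁻¹ dg` of a map `g` into a normed algebra, as a `1`-form with values
in that algebra. It is `0` wherever `g` is not invertible, because `Ring.inverse` is. -/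
noncomputable def maurerCartanForm (g : E → A) (x : E) : E →L[𝕜] A :=
  ContinuousLinearMap.mul 𝕜 A (Ring.inverse (g x)) ∘L fderiv 𝕜 g x

theorem maurerCartanForm_apply (g : E → A) (x v : E) :
    maurerCartanForm 𝕜 g x v = Ring.inverse (g x) * fderiv 𝕜 g x v :=
  rfl

variable (𝕜) in
theorem hasSummableGeomSeries_of_finiteDimensional [CompleteSpace 𝕜] [FiniteDimensional 𝕜 A] :
    HasSummableGeomSeries A :=
  have := FiniteDimensional.complete 𝕜 A
  inferInstance

variable [HasSummableGeomSeries A]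

theorem fderiv_ringInverse_comp_apply (hg : DifferentiableAt 𝕜 g x) (hx : IsUnit (g x)) (u : E) :
    fderiv 𝕜 (fun y => Ring.inverse (g y)) x u =
      -(Ring.inverse (g x) * fderiv 𝕜 g x u * Ring.inverse (g x)) := by
  rw [fderiv_fun_comp x (differentiableAt_inverse hx) hg]
  obtain ⟨a, ha⟩ := hx
  simp [← ha, fderiv_inverse]

theorem differentiableAt_maurerCartanForm (hg : DifferentiableAt 𝕜 g x)
    (hdg : DifferentiableAt 𝕜 (fderiv 𝕜 g) x) (hx : IsUnit (g x)) :
    DifferentiableAt 𝕜 (maurerCartanForm 𝕜 g) x :=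
  ((ContinuousLinearMap.mul 𝕜 A).differentiableAt.comp x (hg.inverse hx)).clm_comp hdg

theorem fderiv_maurerCartanForm_apply (hg : DifferentiableAt 𝕜 g x)
    (hdg : DifferentiableAt 𝕜 (fderiv 𝕜 g) x) (hx : IsUnit (g x)) (u v : E) :
    fderiv 𝕜 (maurerCartanForm 𝕜 g) x u v =
      Ring.inverse (g x) * fderiv 𝕜 (fderiv 𝕜 g) x u v -
        maurerCartanForm 𝕜 g x u * maurerCartanForm 𝕜 g x v := by
  have hmul : HasFDerivAt (fun y => ContinuousLinearMap.mul 𝕜 A (Ring.inverse (g y))) _ x :=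
    (ContinuousLinearMap.mul 𝕜 A).hasFDerivAt.comp x (hg.inverse hx).hasFDerivAt
  have hform : HasFDerivAt (maurerCartanForm 𝕜 g) _ x := hmul.clm_comp hdg.hasFDerivAt
  rw [hform.fderiv]
  simp [fderiv_ringInverse_comp_apply hg hx, maurerCartanForm_apply, mul_assoc, sub_eq_add_neg]

theorem maurerCartan_equation (hg : DifferentiableAt 𝕜 g x)
    (hdg : DifferentiableAt 𝕜 (fderiv 𝕜 g) x) (hsymm : IsSymmSndFDerivAt 𝕜 g x)
    (hx : IsUnit (g x)) (u v : E) :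
    fderiv 𝕜 (maurerCartanForm 𝕜 g) x u v - fderiv 𝕜 (maurerCartanForm 𝕜 g) x v u =
      -⁅maurerCartanForm 𝕜 g x u, maurerCartanForm 𝕜 g x v⁆ := by
  rw [fderiv_maurerCartanForm_apply hg hdg hx, fderiv_maurerCartanForm_apply hg hdg hx,
    hsymm.eq u v, Ring.lie_def]
  abel

theorem trace_maurer_cartan_closed_general [IsRCLikeNormedField 𝕜]
    (T : A →L[𝕜] F) (hT : ∀ a b, T (a * b) = T (b * a))
    (hg : ∀ᶠ y in 𝓝 x, DifferentiableAt 𝕜 g y) (hdg : DifferentiableAt 𝕜 (fderiv 𝕜 g) x)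
    (hx : IsUnit (g x)) (u v : E) :
    fderiv 𝕜 (fun y => T (maurerCartanForm 𝕜 g y v)) x u =
      fderiv 𝕜 (fun y => T (maurerCartanForm 𝕜 g y u)) x v := by
  have hgx : DifferentiableAt 𝕜 g x := hg.self_of_nhds
  have hsymm : IsSymmSndFDerivAt 𝕜 g x :=
    second_derivative_symmetric_of_eventually (hg.mono fun _ hy => hy.hasFDerivAt) hdg.hasFDerivAt
  have hform := differentiableAt_maurerCartanForm hgx hdg hx
  suffices T (fderiv 𝕜 (maurerCartanForm 𝕜 g) x u v - fderiv 𝕜 (maurerCartanForm 𝕜 g) x v u) = 0 by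
    rwa [fderiv_clm_comp_apply_const T hform, fderiv_clm_comp_apply_const T hform, ← sub_eq_zero,
      ← map_sub]
  rw [maurerCartan_equation hgx hdg hsymm hx, Ring.lie_def, map_neg, map_sub, hT, sub_self,
    neg_zero]

end NormedAlgebra

theorem trace_maurer_cartan_closed {p n : ℕ} (hp : 0 < p) (hn : 0 < n)
    {W : Set (Fin p → ℝ)} (hW : IsOpen W)
    (g : (Fin p → ℝ) → Matrix (Fin n) (Fin n) ℂ)
    (hg : ContDiffOn ℝ (⊤ : ℕ∞) g W)
    (hginv : ∀ x ∈ W, IsUnit (g x)) :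
    ∀ x ∈ W, ∀ u v : Fin p → ℝ,
      fderiv ℝ (fun y => (mcForm g y v).trace) x u
        = fderiv ℝ (fun y => (mcForm g y u).trace) x v := by
  intro x hx u v
  have hWx : W ∈ 𝓝 x := hW.mem_nhds hx
  have hdiff : ∀ᶠ y in 𝓝 x, DifferentiableAt ℝ g y :=
    (hg.differentiableOn (by simp)).eventually_differentiableAt hWx
  have hddiff : DifferentiableAt ℝ (fderiv ℝ g) x :=
    ((hg.contDiffAt hWx).fderiv_right (m := 1) (WithTop.coe_le_coe.2 le_top)).differentiableAt
      one_ne_zero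
  -- The entrywise sup norm is not submultiplicative. The row-sum norm is, and since it induces the
  -- same topology, the derivatives (which depend on the topology only) do not change.
  let : NormedRing (Matrix (Fin n) (Fin n) ℂ) := Matrix.linftyOpNormedRing
  let : NormedAlgebra ℝ (Matrix (Fin n) (Fin n) ℂ) := Matrix.linftyOpNormedAlgebra
  have : HasSummableGeomSeries (Matrix (Fin n) (Fin n) ℂ) :=
    hasSummableGeomSeries_of_finiteDimensional ℝ
  let T : Matrix (Fin n) (Fin n) ℂ →L[ℝ] ℂ :=
    (Matrix.traceLinearMap (Fin n) ℝ ℂ).toContinuousLinearMap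
  simp only [mcForm, Matrix.nonsing_inv_eq_ringInverse]
  exact trace_maurer_cartan_closed_general T Matrix.trace_mul_comm hdiff hddiff (hginv x hx) u v
end

section
/- Let W ⊆ ℝ^p be open and let g: W → Matrix n n ℂ be a smooth map such that g(x) is invertible for every x ∈ W. Then the Wess–Zumino 3-form WZ_g = (1/3)·tr(θ_g ∧ θ_g ∧ θ_g), where θ_g = g⁻¹·dg, is closed: d(WZ_g) = 0. -/
/-!
STATEMENT 6: The Wess–Zumino 3-form WZ_g = (1/3)·tr(θ_g ∧ θ_g ∧ θ_g) is closed,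
where θ_g = g⁻¹·dg for a smooth map g : W → Matrix n n ℂ with invertible
values on an open set W ⊆ ℝ^p.  The exterior derivative of a 3-form ω is
(dω)(x)(v₀,…,v₃) = Σᵢ (−1)ⁱ D_{vᵢ}(y ↦ ω(y)(v₀,…,v̂ᵢ,…,v₃))(x).
-/

attribute [local instance] Matrix.normedAddCommGroup Matrix.normedSpace

/-- The Wess–Zumino 3-form `WZ_g = (1/3)·tr(θ_g ∧ θ_g ∧ θ_g)`; the triple wedge of a
matrix-valued 1-form with itself, evaluated at (w 0, w 1, w 2), is the signed sum over
all permutations of the products of values. -/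
noncomputable def wzForm {p n : ℕ}
    (g : (Fin p → ℝ) → Matrix (Fin n) (Fin n) ℂ)
    (x : Fin p → ℝ) (w : Fin 3 → (Fin p → ℝ)) : ℂ :=
  (1 / 3 : ℂ) * ∑ σ : Equiv.Perm (Fin 3),
    ((Equiv.Perm.sign σ : ℤ) : ℂ) *
      (mcForm g x (w (σ 0)) * mcForm g x (w (σ 1)) * mcForm g x (w (σ 2))).trace

/-!
For a 1-form `θ` with values in an algebra carrying a trace `τ`, the form `(1/3) τ(θ ∧ θ ∧ θ)` is
Cartan's 3-form `τ(θ(a) ⁅θ(b), θ(c)⁆)`. Since `⟨a, b⟩ = τ(a b)` is an invariant bilinear form, the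
exterior derivative of Cartan's 3-form is the signed sum of the terms `τ(dθ(a, b) ⁅θ(c), θ(d)⁆)`
over the splittings of the four arguments into two pairs. When `θ` satisfies the Maurer–Cartan
equation `dθ(a, b) = -⁅θ(a), θ(b)⁆`, moving one bracket across `⟨·, ·⟩` turns this sum into the
Jacobi identity paired with `θ(a)`, so it vanishes.
-/

section Tracial

variable {R F Φ : Type*} [Ring R] [AddCommGroup F] [FunLike Φ R F] [AddMonoidHomClass Φ R F]
  {τ : Φ}

theorem map_lie_mul_eq_map_mul_lie (hτ : ∀ a b, τ (a * b) = τ (b * a)) (a b c : R) :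
    τ (⁅a, b⁆ * c) = τ (a * ⁅b, c⁆) := by
  have hcycle : τ (b * a * c) = τ (a * c * b) := by rw [mul_assoc, hτ]
  simp only [Ring.lie_def, sub_mul, mul_sub, map_sub, ← mul_assoc, hcycle]

theorem map_mul_lie_rotate (hτ : ∀ a b, τ (a * b) = τ (b * a)) (a b c : R) :
    τ (a * ⁅b, c⁆) = τ (b * ⁅c, a⁆) := by
  rw [hτ, map_lie_mul_eq_map_mul_lie hτ]

theorem map_lie_mul_lie_jacobi (hτ : ∀ a b, τ (a * b) = τ (b * a)) (a b c d : R) :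
    τ (⁅a, b⁆ * ⁅c, d⁆) + τ (⁅a, c⁆ * ⁅d, b⁆) + τ (⁅a, d⁆ * ⁅b, c⁆) = 0 := by
  have hjacobi : ⁅b, ⁅c, d⁆⁆ + ⁅c, ⁅d, b⁆⁆ + ⁅d, ⁅b, c⁆⁆ = 0 :=
    letI := LieRing.ofAssociativeRing (A := R)
    lie_jacobi b c d
  simp only [map_lie_mul_eq_map_mul_lie hτ, ← map_add, ← mul_add, hjacobi, mul_zero, map_zero]

theorem sum_perm_sign_smul_map_mul (hτ : ∀ a b, τ (a * b) = τ (b * a)) (a : Fin 3 → R) :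
    ∑ σ : Equiv.Perm (Fin 3), (σ.sign : ℤ) • τ (a (σ 0) * a (σ 1) * a (σ 2)) =
      3 • τ (a 0 * ⁅a 1, a 2⁆) := by
  have hcycle (b c d : R) : τ (b * c * d) = τ (c * d * b) := by rw [mul_assoc, hτ]
  have huniv : (Finset.univ : Finset (Equiv.Perm (Fin 3))) =
      {1, Equiv.swap 0 1, Equiv.swap 0 2, Equiv.swap 1 2,
        Equiv.swap 0 1 * Equiv.swap 1 2, Equiv.swap 1 2 * Equiv.swap 0 1} := by decide
  rw [huniv]
  repeat rw [Finset.sum_insert (by decide)]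
  simp only [Finset.sum_singleton, Equiv.Perm.sign_one, Equiv.Perm.sign_swap', Equiv.Perm.sign_mul,
    Equiv.Perm.coe_one, Equiv.Perm.coe_mul, Function.comp_apply, id_eq, Equiv.swap_apply_def,
    Fin.reduceEq, zero_ne_one, one_ne_zero, ↓reduceIte, Units.val_one, Units.val_neg, mul_neg,
    mul_one, neg_neg, one_smul, neg_smul, Ring.lie_def, mul_sub, ← mul_assoc, map_sub]
  rw [hcycle (a 2) (a 1), hcycle (a 1) (a 0), hcycle (a 1) (a 2), hcycle (a 2) (a 0)]
  abel

end Tracial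

section CartanThreeForm

variable {𝕜 E R F : Type*} [NontriviallyNormedField 𝕜] [NormedAddCommGroup E] [NormedSpace 𝕜 E]
  [NormedRing R] [NormedAlgebra 𝕜 R] [NormedAddCommGroup F] [NormedSpace 𝕜 F]

/-- Cartan's 3-form of an algebra-valued 1-form `θ` with respect to a trace `τ`; this is
`(1/3) τ(θ ∧ θ ∧ θ)`, in a shape that needs no division by `3`. -/
def cartanThreeForm (τ : R →L[𝕜] F) (θ : E → E →L[𝕜] R) (x : E) (w : Fin 3 → E) : F :=
  τ (θ x (w 0) * ⁅θ x (w 1), θ x (w 2)⁆)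

/-- The exterior derivative `dθ(u, v) = D_u θ(v) - D_v θ(u)` of a 1-form valued in continuous linear
maps, which spares the passage to 1-forms as alternating maps on `Fin 1 → E`. -/
noncomputable def extDerivOneForm (θ : E → E →L[𝕜] F) (x u v : E) : F :=
  fderiv 𝕜 θ x u v - fderiv 𝕜 θ x v u

variable {τ : R →L[𝕜] F} {θ : E → E →L[𝕜] R} {x : E}

theorem fderiv_cartanThreeForm (hτ : ∀ a b, τ (a * b) = τ (b * a))
    (hθ : DifferentiableAt 𝕜 θ x) (w : Fin 3 → E) (u : E) :
    fderiv 𝕜 (fun y => cartanThreeForm τ θ y w) x u =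
      τ (fderiv 𝕜 θ x u (w 0) * ⁅θ x (w 1), θ x (w 2)⁆) +
      τ (fderiv 𝕜 θ x u (w 1) * ⁅θ x (w 2), θ x (w 0)⁆) +
      τ (fderiv 𝕜 θ x u (w 2) * ⁅θ x (w 0), θ x (w 1)⁆) := by
  have heval (v : E) : HasFDerivAt (θ · v) ((fderiv 𝕜 θ x).flip v) x := by
    simpa using hθ.hasFDerivAt.clm_apply (hasFDerivAt_const v x)
  have hlie := ((heval (w 1)).mul' (heval (w 2))).sub ((heval (w 2)).mul' (heval (w 1)))
  have hform : HasFDerivAt (fun y => cartanThreeForm τ θ y w) _ x :=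
    τ.hasFDerivAt.comp x ((heval (w 0)).mul' hlie)
  rw [hform.fderiv, map_mul_lie_rotate hτ (fderiv 𝕜 θ x u (w 2)),
    ← map_mul_lie_rotate hτ (θ x (w 0)) (fderiv 𝕜 θ x u (w 1))]
  simp only [Ring.lie_def, mul_sub, mul_add, map_sub, map_add, ContinuousLinearMap.comp_apply,
    add_apply, sub_apply, smul_apply, ContinuousLinearMap.flip_apply, smul_eq_mul,
    MulOpposite.smul_eq_mul_unop, MulOpposite.unop_op]
  abel

theorem sum_fderiv_cartanThreeForm (hτ : ∀ a b, τ (a * b) = τ (b * a))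
    (hθ : DifferentiableAt 𝕜 θ x) (v : Fin 4 → E) :
    ∑ i : Fin 4, (-1 : ℤ) ^ (i : ℕ) •
        fderiv 𝕜 (fun y => cartanThreeForm τ θ y (i.removeNth v)) x (v i) =
      τ (extDerivOneForm θ x (v 0) (v 1) * ⁅θ x (v 2), θ x (v 3)⁆) +
      τ (extDerivOneForm θ x (v 0) (v 2) * ⁅θ x (v 3), θ x (v 1)⁆) +
      τ (extDerivOneForm θ x (v 0) (v 3) * ⁅θ x (v 1), θ x (v 2)⁆) +
      (τ (extDerivOneForm θ x (v 2) (v 3) * ⁅θ x (v 0), θ x (v 1)⁆) +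
      τ (extDerivOneForm θ x (v 3) (v 1) * ⁅θ x (v 0), θ x (v 2)⁆) +
      τ (extDerivOneForm θ x (v 1) (v 2) * ⁅θ x (v 0), θ x (v 3)⁆)) := by
  have hface₀ : Fin.removeNth 0 v = ![v 1, v 2, v 3] := by ext j; fin_cases j <;> rfl
  have hface₁ : Fin.removeNth 1 v = ![v 0, v 2, v 3] := by ext j; fin_cases j <;> rfl
  have hface₂ : Fin.removeNth 2 v = ![v 0, v 1, v 3] := by ext j; fin_cases j <;> rfl
  have hface₃ : Fin.removeNth 3 v = ![v 0, v 1, v 2] := by ext j; fin_cases j <;> rfl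
  simp only [Fin.sum_univ_four, hface₀, hface₁, hface₂, hface₃, fderiv_cartanThreeForm hτ hθ,
    extDerivOneForm, sub_mul, Ring.lie_def, mul_sub, map_sub, Matrix.cons_val,
    Fin.coe_ofNat_eq_mod, Nat.reduceMod, Int.reduceNeg, Int.reducePow, one_smul, neg_smul]
  abel

theorem sum_fderiv_cartanThreeForm_eq_zero (hτ : ∀ a b, τ (a * b) = τ (b * a))
    (hθ : DifferentiableAt 𝕜 θ x)
    (hflat : ∀ u v, extDerivOneForm θ x u v = -⁅θ x u, θ x v⁆) (v : Fin 4 → E) :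
    ∑ i : Fin 4, (-1 : ℤ) ^ (i : ℕ) •
      fderiv 𝕜 (fun y => cartanThreeForm τ θ y (i.removeNth v)) x (v i) = 0 := by
  have hjacobi := map_lie_mul_lie_jacobi hτ (θ x (v 0)) (θ x (v 1)) (θ x (v 2)) (θ x (v 3))
  have hjacobi_swap := hjacobi
  simp only [hτ ⁅θ x (v 0), _⁆] at hjacobi_swap
  simp only [sum_fderiv_cartanThreeForm hτ hθ, hflat, neg_mul, map_neg, ← neg_add, hjacobi,
    hjacobi_swap, add_zero, neg_zero]

end CartanThreeForm

section MaurerCartan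

variable {𝕜 E R : Type*} [NontriviallyNormedField 𝕜] [NormedAddCommGroup E] [NormedSpace 𝕜 E]
  [NormedRing R] [NormedAlgebra 𝕜 R]

variable (𝕜) in
/-- The Maurer–Cartan form `g⁻¹ dg` of a map into a normed algebra; it takes the value `0` where
`g` is not invertible. -/
noncomputable def maurerCartan (g : E → R) (x : E) : E →L[𝕜] R :=
  ContinuousLinearMap.mul 𝕜 R (Ring.inverse (g x)) ∘L fderiv 𝕜 g x

variable [HasSummableGeomSeries R] {r : WithTop ℕ∞} {g : E → R} {x : E}

theorem hasFDerivAt_ringInverse_comp (hg : DifferentiableAt 𝕜 g x) (hx : IsUnit (g x)) :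
    HasFDerivAt (fun y => Ring.inverse (g y))
      (-ContinuousLinearMap.mulLeftRight 𝕜 R (Ring.inverse (g x)) (Ring.inverse (g x)) ∘L
        fderiv 𝕜 g x) x := by
  obtain ⟨a, ha⟩ := hx
  have hinv := hasFDerivAt_ringInverse (𝕜 := 𝕜) a
  rw [← Ring.inverse_unit, ha] at hinv
  exact hinv.comp x hg.hasFDerivAt

theorem hasFDerivAt_maurerCartan (hg : DifferentiableAt 𝕜 g x)
    (hg' : DifferentiableAt 𝕜 (fderiv 𝕜 g) x) (hx : IsUnit (g x)) :
    HasFDerivAt (maurerCartan 𝕜 g)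
      ((ContinuousLinearMap.mul 𝕜 R (Ring.inverse (g x))).postcomp E ∘L fderiv 𝕜 (fderiv 𝕜 g) x -
        (ContinuousLinearMap.mul 𝕜 R).bilinearComp
          (maurerCartan 𝕜 g x) (maurerCartan 𝕜 g x)) x := by
  have hmul := (ContinuousLinearMap.mul 𝕜 R).hasFDerivAt.comp x
    (hasFDerivAt_ringInverse_comp hg hx)
  refine (hmul.clm_comp hg'.hasFDerivAt).congr_fderiv ?_
  ext u v
  simp [maurerCartan, mul_assoc, sub_eq_add_neg]

theorem extDerivOneForm_maurerCartan (hg : DifferentiableAt 𝕜 g x)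
    (hg' : DifferentiableAt 𝕜 (fderiv 𝕜 g) x) (hsymm : IsSymmSndFDerivAt 𝕜 g x)
    (hx : IsUnit (g x)) (u v : E) :
    extDerivOneForm (maurerCartan 𝕜 g) x u v =
      -⁅maurerCartan 𝕜 g x u, maurerCartan 𝕜 g x v⁆ := by
  simp only [extDerivOneForm, (hasFDerivAt_maurerCartan hg hg' hx).fderiv]
  simp [hsymm.eq u v, Ring.lie_def]

theorem wz_form_closed_general {F : Type*} [NormedAddCommGroup F] [NormedSpace 𝕜 F]
    {τ : R →L[𝕜] F} (hτ : ∀ a b, τ (a * b) = τ (b * a)) (hg : ContDiffAt 𝕜 r g x)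
    (hr : minSmoothness 𝕜 2 ≤ r) (hx : IsUnit (g x)) (v : Fin 4 → E) :
    ∑ i : Fin 4, (-1 : ℤ) ^ (i : ℕ) •
      fderiv 𝕜 (fun y => cartanThreeForm τ (maurerCartan 𝕜 g) y (i.removeNth v)) x (v i) = 0 := by
  have hg₂ : ContDiffAt 𝕜 2 g x := hg.of_le (le_minSmoothness.trans hr)
  have hg₀ : DifferentiableAt 𝕜 g x := hg₂.differentiableAt (by norm_num)
  have hg₁ : DifferentiableAt 𝕜 (fderiv 𝕜 g) x :=
    (hg₂.fderiv_right (m := 1) (by norm_num)).differentiableAt (by norm_num)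
  exact sum_fderiv_cartanThreeForm_eq_zero hτ
    (hasFDerivAt_maurerCartan hg₀ hg₁ hx).differentiableAt
    (extDerivOneForm_maurerCartan hg₀ hg₁ (hg.isSymmSndFDerivAt hr) hx) v

end MaurerCartan

section Matrix

/- `fderiv` and `ContDiffAt` only see the topology of matrices, which the entrywise norm shares with
the operator norm; the latter makes matrices a normed algebra. -/
open scoped Matrix.Norms.Operator

theorem contDiffAt_matrix_of {𝕜 E α m n : Type*} [NontriviallyNormedField 𝕜]
    [NormedAddCommGroup E] [NormedSpace 𝕜 E] [NormedAddCommGroup α] [NormedSpace 𝕜 α]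
    [Fintype m] [Fintype n] {f : E → m → n → α} {r : WithTop ℕ∞} {x : E}
    (hf : ContDiffAt 𝕜 r f x) : ContDiffAt 𝕜 r (fun y => Matrix.of (f y)) x :=
  let ofCLM : (m → n → α) →L[𝕜] Matrix m n α :=
    { (Matrix.ofLinearEquiv 𝕜 : (m → n → α) ≃ₗ[𝕜] Matrix m n α).toLinearMap with
      cont := continuous_id }
  ofCLM.contDiff.contDiffAt.comp x hf

variable {p n : ℕ}

theorem mcForm_eq_maurerCartan (g : (Fin p → ℝ) → Matrix (Fin n) (Fin n) ℂ)
    (x v : Fin p → ℝ) : mcForm g x v = maurerCartan ℝ g x v := by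
  rw [mcForm, Matrix.nonsing_inv_eq_ringInverse]
  rfl

theorem wzForm_eq_cartanThreeForm (g : (Fin p → ℝ) → Matrix (Fin n) (Fin n) ℂ)
    (x : Fin p → ℝ) (w : Fin 3 → Fin p → ℝ) :
    wzForm g x w = cartanThreeForm (Matrix.traceLinearMap (Fin n) ℝ ℂ).toContinuousLinearMap
      (maurerCartan ℝ g) x w := by
  have h := sum_perm_sign_smul_map_mul (τ := Matrix.traceLinearMap (Fin n) ℝ ℂ)
    Matrix.trace_mul_comm fun i => maurerCartan ℝ g x (w i)
  simp only [zsmul_eq_mul, nsmul_eq_mul, Matrix.traceLinearMap_apply] at h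
  simp only [wzForm, mcForm_eq_maurerCartan, h]
  rw [Nat.cast_ofNat, one_div, inv_mul_cancel_left₀ three_ne_zero]
  rfl

theorem sum_fderiv_wzForm_eq_zero {g : (Fin p → ℝ) → Matrix (Fin n) (Fin n) ℂ} {x : Fin p → ℝ}
    (hg : ContDiffAt ℝ 2 g x) (hx : IsUnit (g x)) (v : Fin 4 → Fin p → ℝ) :
    ∑ i : Fin 4, (-1 : ℂ) ^ (i : ℕ) *
      fderiv ℝ (fun y => wzForm g y (i.removeNth v)) x (v i) = 0 := by
  have h := wz_form_closed_general
    (τ := (Matrix.traceLinearMap (Fin n) ℝ ℂ).toContinuousLinearMap)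
    Matrix.trace_mul_comm hg minSmoothness_of_isRCLikeNormedField.le hx v
  simpa only [wzForm_eq_cartanThreeForm, zsmul_eq_mul, Int.cast_pow, Int.cast_neg, Int.cast_one]
    using h

end Matrix

theorem wz_form_closed {p n : ℕ} (hp : 0 < p) (hn : 0 < n)
    {W : Set (Fin p → ℝ)} (hW : IsOpen W)
    (g : (Fin p → ℝ) → Matrix (Fin n) (Fin n) ℂ)
    (hg : ContDiffOn ℝ (⊤ : ℕ∞) g W)
    (hginv : ∀ x ∈ W, IsUnit (g x)) :
    ∀ x ∈ W, ∀ v : Fin 4 → (Fin p → ℝ),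
      ∑ i : Fin 4, (-1 : ℂ) ^ (i : ℕ) *
        fderiv ℝ (fun y => wzForm g y (fun j => v (i.succAbove j))) x (v i) = 0 := by
  intro x hx v
  have hgx : ContDiffAt ℝ 2 g x :=
    (hg.contDiffAt (hW.mem_nhds hx)).of_le (WithTop.coe_le_coe.2 le_top)
  exact sum_fderiv_wzForm_eq_zero (contDiffAt_matrix_of hgx) (hginv x hx) v
end
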